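/- arXiv:2109.02709 — 2 statements merged into one kernel-verified Lean document; each statement's English description precedes it below -/
import Mathlib

section
/- Let p ≥ 1 and let Ψ be a nonnegative strictly increasing function on [0,∞) with Ψ(0) = 0 and Ψ(∞) = ∞ such that Ψ^p ∈ Lle(0,∞) with quadruple (0, β_p, γ_p, ν_p) satisfying β_p − ∫_{(0,∞)} x³/(1+x²) ν_p(dx) ∈ [0,∞). Then the function f(t) := (t²/Γ(p+1)) ∫₀^∞ e^{−t x} Ψ(x)^p dx, t > 0, is a Stieltjes transform, with Γ(p+1)·f(t) = (Ψ^p)'(0+) + γ_p²/t + ∫_{(0,∞)} x²/(t+x) ν_p(dx); equivalently, t ↦ (t³/Γ(p+1)) ∫₀^∞ e^{−t x} Ψ(x)^p dx is a complete Bernstein function. -/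
open MeasureTheory Set Filter

/-- A Stieltjes transform on `(0,∞)`:
`f(λ) = d + q/λ + ∫_{(0,∞)} (λ+u)⁻¹ Δ(du)` with `d, q ≥ 0` and `Δ` a Borel measure on
`(0,∞)` integrating `(1+u)⁻¹`. -/
def IsStieltjesFn (f : ℝ → ℝ) : Prop :=
  ∃ d q : ℝ, 0 ≤ d ∧ 0 ≤ q ∧ ∃ Δ : Measure ℝ, Δ {x | x ≤ 0} = 0 ∧
    (∫⁻ u, ENNReal.ofReal ((1 + u)⁻¹) ∂Δ) < ⊤ ∧
    ∀ l : ℝ, 0 < l → f l = d + q / l + ∫ u, (l + u)⁻¹ ∂Δ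

/-- A complete Bernstein function on `(0,∞)`:
`f(λ) = q + dλ + ∫_{(0,∞)} λ/(λ+x) σ(dx)` with `q, d ≥ 0` and `σ` a Borel measure on
`(0,∞)` integrating `(1+x)⁻¹`. -/
def IsCompleteBernsteinFn (f : ℝ → ℝ) : Prop :=
  ∃ q d : ℝ, 0 ≤ q ∧ 0 ≤ d ∧ ∃ σ : Measure ℝ, σ {x | x ≤ 0} = 0 ∧
    (∫⁻ x, ENNReal.ofReal ((1 + x)⁻¹) ∂σ) < ⊤ ∧
    ∀ l : ℝ, 0 < l → f l = q + d * l + ∫ x, l / (l + x) ∂σ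

/-!
Since `x / (1 + x²) = x - x³ / (1 + x²)`, the condition on `β` allows full compensation in the
representation of `Φ = Ψ ^ p`: it becomes
`Φ(l) = b l + (γ² / 2) l² + ∫ (e^{-lx} - 1 + lx) ν(dx)` with `b = β - ∫ x³ / (1 + x²) ν(dx) ≥ 0`.
The kernel is now nonnegative, so Tonelli's theorem computes the Laplace transform under the
integral sign; that of `l ↦ e^{-lx} - 1 + lx` is `x² / (t² (t + x))`. Multiplying by `t²` gives a
Stieltjes representation with measure `x² ν(dx)`.
-/

/-- The Laplace transform of `g` at `t` converges absolutely and has the value `v`. Only the values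
of `g` on `(0, ∞)` matter. -/
def HasLaplaceTransformAt (g : ℝ → ℝ) (t v : ℝ) : Prop :=
  IntegrableOn (fun l => Real.exp (-t * l) * g l) (Ioi 0) ∧
    ∫ l in Ioi (0 : ℝ), Real.exp (-t * l) * g l = v

namespace HasLaplaceTransformAt

variable {f g : ℝ → ℝ} {t v w : ℝ}

theorem congr (hg : HasLaplaceTransformAt g t v) (hfg : EqOn f g (Ioi 0)) :
    HasLaplaceTransformAt f t v := by
  have h : EqOn (fun l => Real.exp (-t * l) * f l) (fun l => Real.exp (-t * l) * g l) (Ioi 0) :=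
    fun l hl => congrArg (Real.exp (-t * l) * ·) (hfg hl)
  exact ⟨(integrableOn_congr_fun h measurableSet_Ioi).2 hg.1,
    (setIntegral_congr_fun measurableSet_Ioi h).trans hg.2⟩

theorem add (hf : HasLaplaceTransformAt f t v) (hg : HasLaplaceTransformAt g t w) :
    HasLaplaceTransformAt (fun l => f l + g l) t (v + w) := by
  simp only [HasLaplaceTransformAt, mul_add]
  exact ⟨hf.1.add hg.1, by rw [integral_add hf.1 hg.1, hf.2, hg.2]⟩

theorem const_mul (hf : HasLaplaceTransformAt f t v) (a : ℝ) :
    HasLaplaceTransformAt (fun l => a * f l) t (a * v) := by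
  simp only [HasLaplaceTransformAt, mul_left_comm _ a]
  exact ⟨hf.1.const_mul a, by rw [integral_const_mul, hf.2]⟩

theorem exp_neg_mul {a : ℝ} (hf : HasLaplaceTransformAt f (t + a) v) :
    HasLaplaceTransformAt (fun l => Real.exp (-a * l) * f l) t v := by
  simpa only [HasLaplaceTransformAt, ← mul_assoc, ← Real.exp_add, ← add_mul, ← neg_add] using hf

theorem integral_of_nonneg {α : Type*} [MeasurableSpace α] {μ : Measure α} [SFinite μ]
    {k : ℝ → α → ℝ} {v : α → ℝ} (hk : Measurable (Function.uncurry k))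
    (hk_nonneg : ∀ᵐ x ∂μ, ∀ l, 0 < l → 0 ≤ k l x)
    (hkv : ∀ᵐ x ∂μ, HasLaplaceTransformAt (fun l => k l x) t (v x)) (hv : Integrable v μ) :
    HasLaplaceTransformAt (fun l => ∫ x, k l x ∂μ) t (∫ x, v x ∂μ) := by
  let K : ℝ → α → ℝ := fun l x => Real.exp (-t * l) * k l x
  have hK_meas : Measurable (Function.uncurry K) :=
    Measurable.mul (f := fun z : ℝ × α => Real.exp (-t * z.1)) (by fun_prop) hk
  have hK : Integrable (Function.uncurry K) ((volume.restrict (Ioi 0)).prod μ) := by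
    refine (integrable_prod_iff' hK_meas.aestronglyMeasurable).2 ⟨hkv.mono fun x hx => hx.1, ?_⟩
    refine hv.congr ?_
    filter_upwards [hk_nonneg, hkv] with x hx_nonneg hx
    refine hx.2.symm.trans (setIntegral_congr_fun measurableSet_Ioi fun l hl => ?_)
    exact (Real.norm_of_nonneg (mul_nonneg (Real.exp_pos _).le (hx_nonneg l hl))).symm
  simp only [HasLaplaceTransformAt, ← integral_const_mul]
  refine ⟨hK.integral_prod_left, ?_⟩
  rw [integral_integral_swap hK]
  exact integral_congr_ae (hkv.mono fun x hx => hx.2)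

end HasLaplaceTransformAt

theorem hasLaplaceTransformAt_pow (n : ℕ) {t : ℝ} (ht : 0 < t) :
    HasLaplaceTransformAt (fun l => l ^ n) t (n.factorial / t ^ (n + 1)) := by
  have hint : ∫ l in Ioi (0 : ℝ), Real.exp (-t * l) * l ^ n = n.factorial / t ^ (n + 1) := by
    have h := Real.integral_rpow_mul_exp_neg_mul_Ioi (a := n + 1) (by positivity) ht
    rw [Real.Gamma_nat_eq_factorial, add_sub_cancel_right, ← Nat.cast_succ] at h
    simp only [Real.rpow_natCast, ← neg_mul, mul_comm _ (Real.exp _)] at h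
    rw [h, one_div_pow, one_div_mul_eq_div]
  exact ⟨Integrable.of_integral_ne_zero (hint ▸ by positivity), hint⟩

/-- The fully compensated exponential `e^{-y} - 1 + y`, the first-order Taylor remainder of
`e^{-y}`. -/
noncomputable def expNegRemainder (y : ℝ) : ℝ :=
  Real.exp (-y) - 1 + y

@[fun_prop]
theorem continuous_expNegRemainder : Continuous expNegRemainder := by
  unfold expNegRemainder
  fun_prop

theorem expNegRemainder_nonneg (y : ℝ) : 0 ≤ expNegRemainder y := by
  unfold expNegRemainder
  linarith [Real.add_one_le_exp (-y)]

theorem expNegRemainder_le_sq_div_one_add {y : ℝ} (hy : 0 ≤ y) :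
    expNegRemainder y ≤ y ^ 2 / (1 + y) := by
  have hexp : Real.exp (-y) ≤ (1 + y)⁻¹ := by
    rw [Real.exp_neg]
    gcongr
    linarith [Real.add_one_le_exp y]
  calc expNegRemainder y ≤ (1 + y)⁻¹ - 1 + y := by unfold expNegRemainder; gcongr
    _ = y ^ 2 / (1 + y) := by field_simp; ring

theorem hasLaplaceTransformAt_expNegRemainder {t x : ℝ} (ht : 0 < t) (htx : 0 < t + x) :
    HasLaplaceTransformAt (fun l => expNegRemainder (l * x)) t (x ^ 2 / (t + x) / t ^ 2) := by
  have h := (((hasLaplaceTransformAt_pow 0 htx).exp_neg_mul).add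
    ((hasLaplaceTransformAt_pow 0 ht).const_mul (-1))).add
    ((hasLaplaceTransformAt_pow 1 ht).const_mul x)
  convert h.congr fun l _ => ?_ using 1
  · simp only [Nat.factorial]
    field_simp
    ring
  · simp only [expNegRemainder, neg_mul, mul_comm x l]
    ring

theorem sigmaFinite_of_integrable_of_ae_ne_zero {α E : Type*} [MeasurableSpace α]
    [NormedAddCommGroup E] {μ : Measure α} {f : α → E} (hf : Integrable f μ)
    (hf_ne : ∀ᵐ x ∂μ, f x ≠ 0) : SigmaFinite μ := by
  have hfin := hf.aefinStronglyMeasurable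
  have hmem : ∀ᵐ x ∂μ, x ∈ hfin.sigmaFiniteSet := by
    filter_upwards [hf_ne, ae_imp_of_ae_restrict hfin.ae_eq_zero_compl] with x hx himp
    exact not_not.1 fun hx_notMem => hx (himp hx_notMem)
  rw [← Measure.restrict_eq_self_of_ae_mem hmem]
  exact hfin.sigmaFinite_restrict

section LevyMeasure

variable {ν : Measure ℝ}

theorem integrable_div_add_of_integrable_div_add {f : ℝ → ℝ} {s t : ℝ} (hs : 0 < s) (ht : 0 < t)
    (hν : ∀ᵐ x ∂ν, 0 < x) (hf : Integrable (fun x => f x / (s + x)) ν) :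
    Integrable (fun x => f x / (t + x)) ν := by
  have hbound : ∀ᵐ x ∂ν, ‖(s + x) / (t + x)‖ ≤ 1 + s / t := by
    filter_upwards [hν] with x hx
    rw [Real.norm_of_nonneg (by positivity), add_div, add_comm]
    gcongr
    · exact div_le_one_of_le₀ (by linarith) (by positivity)
    · linarith
  refine (hf.mul_bdd (g := fun x => (s + x) / (t + x))
    (Measurable.aestronglyMeasurable (by fun_prop)) hbound).congr ?_
  filter_upwards [hν] with x hx
  field_simp

theorem integrable_sq_div_one_add (hν : ∀ᵐ x ∂ν, 0 < x)
    (hν_int : (∫⁻ x, ENNReal.ofReal (min (x ^ 2) 1) ∂ν) < ⊤)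
    (hν_cube : Integrable (fun x => x ^ 3 / (1 + x ^ 2)) ν) :
    Integrable (fun x => x ^ 2 / (1 + x)) ν := by
  have hmin : Integrable (fun x : ℝ => min (x ^ 2) 1) ν :=
    ⟨by fun_prop, by rwa [hasFiniteIntegral_iff_ofReal (ae_of_all _ fun x => by positivity)]⟩
  refine (hmin.add hν_cube).mono' (Measurable.aestronglyMeasurable (by fun_prop)) ?_
  filter_upwards [hν] with x hx
  rw [Real.norm_of_nonneg (by positivity), Pi.add_apply]
  have hcube : 0 ≤ x ^ 3 / (1 + x ^ 2) := by positivity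
  rcases le_total x 1 with hx_le | hx_ge
  · rw [min_eq_left (by nlinarith)]
    have : x ^ 2 / (1 + x) ≤ x ^ 2 := div_le_self (sq_nonneg x) (by linarith)
    linarith
  · rw [min_eq_right (by nlinarith)]
    have hle : x ^ 2 / (1 + x) ≤ x := by
      rw [div_le_iff₀ (by positivity)]
      nlinarith
    have hsplit : x = x / (1 + x ^ 2) + x ^ 3 / (1 + x ^ 2) := by
      field_simp
    have htail : x / (1 + x ^ 2) ≤ 1 := div_le_one_of_le₀ (by nlinarith) (by positivity)
    linarith

theorem integrable_expNegRemainder_mul {l : ℝ} (hl : 0 < l) (hν : ∀ᵐ x ∂ν, 0 < x)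
    (hν_sq : Integrable (fun x => x ^ 2 / (1 + x)) ν) :
    Integrable (fun x => expNegRemainder (l * x)) ν := by
  refine ((integrable_div_add_of_integrable_div_add one_pos (inv_pos.2 hl) hν
    hν_sq).const_mul l).mono' (Continuous.aestronglyMeasurable (by fun_prop)) ?_
  filter_upwards [hν] with x hx
  rw [Real.norm_of_nonneg (expNegRemainder_nonneg _)]
  refine (expNegRemainder_le_sq_div_one_add (by positivity)).trans_eq ?_
  field_simp

theorem integral_truncated_compensation_eq_sub {l : ℝ} (hl : 0 < l) (hν : ∀ᵐ x ∂ν, 0 < x)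
    (hν_sq : Integrable (fun x => x ^ 2 / (1 + x)) ν)
    (hν_cube : Integrable (fun x => x ^ 3 / (1 + x ^ 2)) ν) :
    ∫ x, (Real.exp (-l * x) - 1 + l * x / (1 + x ^ 2)) ∂ν =
      ∫ x, expNegRemainder (l * x) ∂ν - l * ∫ x, x ^ 3 / (1 + x ^ 2) ∂ν := by
  rw [← integral_const_mul,
    ← integral_sub (integrable_expNegRemainder_mul hl hν hν_sq) (hν_cube.const_mul l)]
  refine integral_congr_ae (ae_of_all _ fun x => ?_)
  have : 1 + x ^ 2 ≠ 0 := by positivity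
  simp only [expNegRemainder, neg_mul]
  field_simp
  ring

theorem hasLaplaceTransformAt_integral_expNegRemainder {t : ℝ} (ht : 0 < t)
    (hν : ∀ᵐ x ∂ν, 0 < x) (hν_sq : Integrable (fun x => x ^ 2 / (1 + x)) ν) :
    HasLaplaceTransformAt (fun l => ∫ x, expNegRemainder (l * x) ∂ν) t
      ((∫ x, x ^ 2 / (t + x) ∂ν) / t ^ 2) := by
  have : SigmaFinite ν := by
    refine sigmaFinite_of_integrable_of_ae_ne_zero hν_sq (hν.mono fun x hx => ?_)
    positivity
  rw [← integral_div]
  exact .integral_of_nonneg (by unfold Function.uncurry; fun_prop)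
    (ae_of_all _ fun _ _ _ => expNegRemainder_nonneg _)
    (hν.mono fun x hx => hasLaplaceTransformAt_expNegRemainder ht (by positivity))
    ((integrable_div_add_of_integrable_div_add one_pos ht hν hν_sq).div_const _)

theorem hasLaplaceTransformAt_of_eq_levyKhintchine {Φ : ℝ → ℝ} {β γ t : ℝ} (ht : 0 < t)
    (hν : ∀ᵐ x ∂ν, 0 < x) (hν_sq : Integrable (fun x => x ^ 2 / (1 + x)) ν)
    (hν_cube : Integrable (fun x => x ^ 3 / (1 + x ^ 2)) ν)
    (hΦ : ∀ l, 0 < l → Φ l = β * l + γ ^ 2 / 2 * l ^ 2 +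
      ∫ x, (Real.exp (-l * x) - 1 + l * x / (1 + x ^ 2)) ∂ν) :
    HasLaplaceTransformAt Φ t
      (((β - ∫ x, x ^ 3 / (1 + x ^ 2) ∂ν) + γ ^ 2 / t + ∫ x, x ^ 2 / (t + x) ∂ν) / t ^ 2) := by
  have h := ((hasLaplaceTransformAt_pow 1 ht).const_mul (β - ∫ x, x ^ 3 / (1 + x ^ 2) ∂ν)).add
    ((hasLaplaceTransformAt_pow 2 ht).const_mul (γ ^ 2 / 2)) |>.add
    (hasLaplaceTransformAt_integral_expNegRemainder ht hν hν_sq)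
  convert h.congr fun l hl => ?_ using 1
  · simp only [Nat.factorial]
    push_cast
    field_simp
  · rw [hΦ l hl, integral_truncated_compensation_eq_sub hl hν hν_sq hν_cube]
    ring

end LevyMeasure

theorem isStieltjesFn_of_density {f w : ℝ → ℝ} {d q : ℝ} {μ : Measure ℝ} (hd : 0 ≤ d) (hq : 0 ≤ q)
    (hμ : μ {x | x ≤ 0} = 0) (hw : Measurable w) (hw_nonneg : ∀ x, 0 ≤ w x)
    (hw_int : Integrable (fun x => w x / (1 + x)) μ)
    (hf : ∀ t, 0 < t → f t = d + q / t + ∫ x, w x / (t + x) ∂μ) : IsStieltjesFn f := by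
  have hw_ofReal : Measurable fun x => ENNReal.ofReal (w x) := hw.ennreal_ofReal
  refine ⟨d, q, hd, hq, μ.withDensity fun x => ENNReal.ofReal (w x),
    withDensity_absolutelyContinuous _ _ hμ, ?_, fun t ht => ?_⟩
  · rw [lintegral_withDensity_eq_lintegral_mul _ hw_ofReal (by fun_prop)]
    simpa only [Pi.mul_apply, ← ENNReal.ofReal_mul (hw_nonneg _), ← div_eq_mul_inv]
      using hw_int.lintegral_lt_top
  · rw [integral_withDensity_eq_integral_toReal_smul hw_ofReal (by simp)]
    simpa only [ENNReal.toReal_ofReal (hw_nonneg _), smul_eq_mul, ← div_eq_mul_inv] using hf t ht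

theorem IsStieltjesFn.const_mul {f : ℝ → ℝ} (hf : IsStieltjesFn f) {a : ℝ} (ha : 0 ≤ a) :
    IsStieltjesFn (fun t => a * f t) := by
  obtain ⟨d, q, hd, hq, Δ, hΔ, hΔ_int, hf_eq⟩ := hf
  refine ⟨a * d, a * q, by positivity, by positivity, ENNReal.ofReal a • Δ, by simp [hΔ],
    ?_, fun t ht => ?_⟩
  · rw [lintegral_smul_measure]
    exact ENNReal.mul_lt_top ENNReal.ofReal_lt_top hΔ_int
  · rw [integral_smul_measure, ENNReal.toReal_ofReal ha, smul_eq_mul]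
    simp only [hf_eq t ht]
    ring

theorem isCompleteBernsteinFn_id_mul_iff {f : ℝ → ℝ} :
    IsCompleteBernsteinFn (fun t => t * f t) ↔ IsStieltjesFn f := by
  have hmul (d q : ℝ) (μ : Measure ℝ) {t : ℝ} (ht : 0 < t) :
      q + d * t + ∫ x, t / (t + x) ∂μ = t * (d + q / t + ∫ x, (t + x)⁻¹ ∂μ) := by
    simp only [div_eq_mul_inv t, integral_const_mul]
    field_simp
    ring
  constructor
  · rintro ⟨q, d, hq, hd, μ, hμ, hμ_int, hf⟩
    exact ⟨d, q, hd, hq, μ, hμ, hμ_int, fun t ht =>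
      mul_left_cancel₀ ht.ne' ((hf t ht).trans (hmul d q μ ht))⟩
  · rintro ⟨d, q, hd, hq, μ, hμ, hμ_int, hf⟩
    exact ⟨q, d, hq, hd, μ, hμ, hμ_int, fun t ht =>
      (congrArg (t * ·) (hf t ht)).trans (hmul d q μ ht).symm⟩

theorem stmt_10_general {Φ : ℝ → ℝ} {β γ C : ℝ} {ν : Measure ℝ} (hC : 0 < C)
    (hν_supp : ν {x | x ≤ 0} = 0) (hν_int : (∫⁻ x, ENNReal.ofReal (min (x ^ 2) 1) ∂ν) < ⊤)
    (hΦ : ∀ l : ℝ, 0 < l →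
      Φ l = β * l + γ ^ 2 / 2 * l ^ 2 +
        ∫ x, (Real.exp (-l * x) - 1 + l * x / (1 + x ^ 2)) ∂ν)
    (hβ_int : Integrable (fun x => x ^ 3 / (1 + x ^ 2)) ν)
    (hβ_pos : 0 ≤ β - ∫ x, x ^ 3 / (1 + x ^ 2) ∂ν) :
    IsStieltjesFn (fun t => t ^ 2 / C * ∫ x in Ioi (0 : ℝ), Real.exp (-t * x) * Φ x) ∧
    (∀ t : ℝ, 0 < t →
      C * (t ^ 2 / C * ∫ x in Ioi (0 : ℝ), Real.exp (-t * x) * Φ x) =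
        (β - ∫ x, x ^ 3 / (1 + x ^ 2) ∂ν) + γ ^ 2 / t + ∫ x, x ^ 2 / (t + x) ∂ν) ∧
    IsCompleteBernsteinFn (fun t => t ^ 3 / C * ∫ x in Ioi (0 : ℝ), Real.exp (-t * x) * Φ x) := by
  have hν : ∀ᵐ x ∂ν, 0 < x := by simpa only [ae_iff, not_lt] using hν_supp
  have hν_sq := integrable_sq_div_one_add hν hν_int hβ_int
  have hrepr (t : ℝ) (ht : 0 < t) :
      C * (t ^ 2 / C * ∫ x in Ioi (0 : ℝ), Real.exp (-t * x) * Φ x) =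
        (β - ∫ x, x ^ 3 / (1 + x ^ 2) ∂ν) + γ ^ 2 / t + ∫ x, x ^ 2 / (t + x) ∂ν := by
    rw [(hasLaplaceTransformAt_of_eq_levyKhintchine ht hν hν_sq hβ_int hΦ).2]
    field_simp
  have hStieltjes :
      IsStieltjesFn (fun t => t ^ 2 / C * ∫ x in Ioi (0 : ℝ), Real.exp (-t * x) * Φ x) := by
    have h := isStieltjesFn_of_density hβ_pos (sq_nonneg γ) hν_supp (by fun_prop) sq_nonneg
      hν_sq hrepr
    simpa only [inv_mul_cancel_left₀ hC.ne'] using h.const_mul (inv_nonneg.2 hC.le)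
  refine ⟨hStieltjes, hrepr, ?_⟩
  convert isCompleteBernsteinFn_id_mul_iff.2 hStieltjes using 2 with t
  ring

/-- Let `p ≥ 1` and let `Ψ` be nonnegative strictly increasing on `[0,∞)`
with `Ψ(0) = 0`, `Ψ(∞) = ∞`, such that `Ψ^p ∈ Lle(0,∞)` with quadruple `(0, β_p, γ_p, ν_p)`
satisfying `β_p − ∫ x³/(1+x²) ν_p(dx) ∈ [0,∞)`. Then
`f(t) = (t²/Γ(p+1)) ∫₀^∞ e^{−tx} Ψ(x)^p dx` is a Stieltjes transform, with
`Γ(p+1)·f(t) = (Ψ^p)'(0+) + γ_p²/t + ∫ x²/(t+x) ν_p(dx)`; equivalently,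
`t ↦ (t³/Γ(p+1)) ∫₀^∞ e^{−tx} Ψ(x)^p dx` is a complete Bernstein function. -/
theorem stmt_10 (p : ℝ) (hp : 1 ≤ p) (Ψ : ℝ → ℝ)
    (hΨpos : ∀ x : ℝ, 0 ≤ x → 0 ≤ Ψ x) (hmono : StrictMonoOn Ψ (Ici 0))
    (h0 : Ψ 0 = 0) (hinf : Tendsto Ψ atTop atTop)
    (β γ : ℝ) (hγ : 0 ≤ γ) (ν : Measure ℝ) (hν_supp : ν {x | x ≤ 0} = 0)
    (hν_int : (∫⁻ x, ENNReal.ofReal (min (x ^ 2) 1) ∂ν) < ⊤)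
    (hLle : ∀ l : ℝ, 0 ≤ l →
      Ψ l ^ p = β * l + γ ^ 2 / 2 * l ^ 2 +
        ∫ x, (Real.exp (-l * x) - 1 + l * x / (1 + x ^ 2)) ∂ν)
    (hβ_int : Integrable (fun x => x ^ 3 / (1 + x ^ 2)) ν)
    (hβ_pos : 0 ≤ β - ∫ x, x ^ 3 / (1 + x ^ 2) ∂ν) :
    IsStieltjesFn
      (fun t => t ^ 2 / Real.Gamma (p + 1) * ∫ x in Ioi (0 : ℝ), Real.exp (-t * x) * Ψ x ^ p) ∧
    (∀ t : ℝ, 0 < t →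
      Real.Gamma (p + 1) *
          (t ^ 2 / Real.Gamma (p + 1) * ∫ x in Ioi (0 : ℝ), Real.exp (-t * x) * Ψ x ^ p) =
        (β - ∫ x, x ^ 3 / (1 + x ^ 2) ∂ν) + γ ^ 2 / t + ∫ x, x ^ 2 / (t + x) ∂ν) ∧
    IsCompleteBernsteinFn
      (fun t => t ^ 3 / Real.Gamma (p + 1) * ∫ x in Ioi (0 : ℝ), Real.exp (-t * x) * Ψ x ^ p) :=
  stmt_10_general (Real.Gamma_pos_of_pos (by linarith)) hν_supp hν_int
    (fun l hl => hLle l hl.le) hβ_int hβ_pos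
end

section
/- For every s > 0, 2·∫₀^∞ cos(s x) · x / ((1+x²)·(e^{πx} − 1)) dx = (e^{−s}·Ei(s) − e^{s}·E₁(s))/2 + cosh(s)·log((1 + e^{−s})/(1 − e^{−s})) − 1. Moreover, at s = 0, 2·∫₀^∞ x / ((1+x²)·(e^{πx} − 1)) dx = γ + log 2 − 1. -/
open MeasureTheory Set

/-- The exponential integral `E₁(x) = ∫_x^∞ e^{−t}/t dt` for `x > 0`. -/
noncomputable def expIntegralE1 (x : ℝ) : ℝ :=
  ∫ t in Ioi x, Real.exp (-t) / t

/-- The principal-value exponential integral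
`Ei(x) = γ + log x + Σ_{k≥1} x^k/(k·k!)` for `x > 0`. -/
noncomputable def expIntegralEi (x : ℝ) : ℝ :=
  Real.eulerMascheroniConstant + Real.log x +
    ∑' k : ℕ, x ^ (k + 1) / ((k + 1) * (Nat.factorial (k + 1)))

/-!
Writing `∫ u in Ioi s, exp (-u) * sin (u * x)` in closed form and swapping integrals turns
`2 ∫ cos (s x) x / (1 + x²) w(x) dx` into
`exp s * ∫ u in Ioi s, exp (-u) * S u + exp (-s) * ∫ u in Ioi (-s), exp (-u) * S u`, where `S` is
the sine transform of the weight `w`. For the weight `(exp (π x) - 1)⁻¹`, expanding in a geometric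
series and using the Mittag-Leffler expansion of `coth` shows that `S u = (coth u - 1 / u) / 2`.
Now `exp (-u) * (coth u - 1 / u)` has the primitive `exp (-u) - log |coth (u / 2)| - Ei (-u)`, in
which the two logarithmic singularities at `0` cancel. This primitive is therefore valid on all of
`ℝ`, and it gives the integrals over `(s, ∞)`, `(-s, ∞)` and `(0, ∞)` alike.
-/

open Filter Real Topology

section SineTransform

/-- The sine transform `u ↦ ∫ sin (u x) w(x) dμ(x)` of the density `w` with respect to `μ`. -/
noncomputable def sineTransform (μ : Measure ℝ) (w : ℝ → ℝ) (u : ℝ) : ℝ :=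
  ∫ x, sin (u * x) * w x ∂μ

theorem sin_eq_mul_sinc (x : ℝ) : sin x = x * sinc x := by
  rcases eq_or_ne x 0 with rfl | hx
  · simp
  · rw [sinc_of_ne_zero hx, mul_div_cancel₀ _ hx]

theorem abs_sin_mul_mul_le (u x y : ℝ) : |sin (u * x) * y| ≤ |u| * |x * y| := by
  rw [abs_mul, abs_mul x, ← mul_assoc, ← abs_mul u]
  exact mul_le_mul_of_nonneg_right abs_sin_le_abs (abs_nonneg y)

theorem integral_Ioi_exp_neg_mul_mul_sin {a : ℝ} (ha : 0 < a) (b s : ℝ) :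
    ∫ t in Ioi s, exp (-(a * t)) * sin (b * t) =
      exp (-(a * s)) * ((b * cos (b * s) + a * sin (b * s)) / (a ^ 2 + b ^ 2)) := by
  let z : ℂ := ⟨-a, b⟩
  have hz : z.re < 0 := neg_lt_zero.2 ha
  have him (t : ℝ) : (Complex.exp (z * t)).im = exp (-(a * t)) * sin (b * t) := by
    simp [z, Complex.exp_im]
  have hre (t : ℝ) : (Complex.exp (z * t)).re = exp (-(a * t)) * cos (b * t) := by
    simp [z, Complex.exp_re]
  calc ∫ t in Ioi s, exp (-(a * t)) * sin (b * t)
      = (∫ t in Ioi s, Complex.exp (z * t)).im := by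
        simp only [← him]
        exact integral_im (integrableOn_exp_mul_complex_Ioi hz s)
    _ = exp (-(a * s)) * ((b * cos (b * s) + a * sin (b * s)) / (a ^ 2 + b ^ 2)) := by
        have hab : a ^ 2 + b ^ 2 ≠ 0 := by positivity
        have hnormSq : Complex.normSq z = a ^ 2 + b ^ 2 := by
          simp only [z, Complex.normSq_mk]
          ring
        rw [integral_exp_mul_complex_Ioi hz, Complex.div_im, Complex.neg_re, Complex.neg_im, him,
          hre, hnormSq]
        simp only [z]
        field_simp
        ring

theorem integral_Ioi_exp_neg_mul_mul_sin_mul {a : ℝ} (ha : 0 < a) (x y s : ℝ) :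
    ∫ u in Ioi s, exp (-(a * u)) * (sin (u * x) * y) =
      exp (-(a * s)) * ((x * cos (s * x) + a * sin (s * x)) / (a ^ 2 + x ^ 2) * y) := by
  simp only [← mul_assoc, mul_comm _ x, integral_mul_const, integral_Ioi_exp_neg_mul_mul_sin ha]

theorem integrableOn_mul_exp_neg_mul {a : ℝ} (ha : 0 < a) (s : ℝ) :
    IntegrableOn (fun t => t * exp (-(a * t))) (Ioi s) := by
  refine integrable_of_isBigO_exp_neg (half_pos ha) (by fun_prop) ?_
  have hlin : (fun t : ℝ => t) =O[atTop] fun t => exp (a / 2 * t) := by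
    simpa using (isLittleO_pow_exp_pos_mul_atTop 1 (half_pos ha)).isBigO
  refine (hlin.mul (Asymptotics.isBigO_refl (fun t => exp (-(a * t))) atTop)).congr_right
    fun t => ?_
  rw [← exp_add]
  ring_nf

variable {μ : Measure ℝ} {w : ℝ → ℝ}

theorem abs_sineTransform_le (hw : Integrable (fun x => x * w x) μ) (u : ℝ) :
    |sineTransform μ w u| ≤ |u| * ∫ x, |x * w x| ∂μ := by
  rw [sineTransform, ← integral_const_mul, ← norm_eq_abs]
  exact norm_integral_le_of_norm_le (hw.abs.const_mul |u|)
    (ae_of_all _ fun x => abs_sin_mul_mul_le u x (w x))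

theorem tendsto_sineTransform_zero (hw : Integrable (fun x => x * w x) μ) :
    Tendsto (sineTransform μ w) (𝓝 0) (𝓝 0) := by
  refine squeeze_zero_norm (abs_sineTransform_le hw) ?_
  simpa using (continuous_abs.tendsto (0 : ℝ)).mul_const (∫ x, |x * w x| ∂μ)

variable {a : ℝ}

theorem integrable_prod_exp_neg_mul_mul_sin (ha : 0 < a)
    (hw : Integrable (fun x => x * w x) μ) (s : ℝ) :
    Integrable (Function.uncurry fun x u => exp (-(a * u)) * (sin (u * x) * w x))
      (μ.prod (volume.restrict (Ioi s))) := by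
  have hfactor : (Function.uncurry fun x u => exp (-(a * u)) * (sin (u * x) * w x)) =
      fun p : ℝ × ℝ => exp (-(a * p.2)) * (p.2 * sinc (p.2 * p.1)) * (p.1 * w p.1) := by
    ext ⟨x, u⟩
    simp only [Function.uncurry_apply_pair, sin_eq_mul_sinc (u * x)]
    ring
  have hmeas : AEStronglyMeasurable
      (Function.uncurry fun x u => exp (-(a * u)) * (sin (u * x) * w x))
      (μ.prod (volume.restrict (Ioi s))) := by
    have hsinc : Continuous fun p : ℝ × ℝ => sinc (p.2 * p.1) :=
      continuous_sinc.comp (continuous_snd.mul continuous_fst)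
    have hcont : Continuous fun p : ℝ × ℝ => exp (-(a * p.2)) * (p.2 * sinc (p.2 * p.1)) :=
      Continuous.mul (by fun_prop) (continuous_snd.mul hsinc)
    rw [hfactor]
    exact hcont.aestronglyMeasurable.mul hw.1.comp_fst
  refine (hw.mul_prod (integrableOn_mul_exp_neg_mul ha s)).mono hmeas
    (ae_of_all _ fun ⟨x, u⟩ => ?_)
  calc ‖exp (-(a * u)) * (sin (u * x) * w x)‖
      ≤ exp (-(a * u)) * (|u| * |x * w x|) := by
        rw [norm_mul, norm_eq_abs, abs_exp]
        gcongr
        exact abs_sin_mul_mul_le u x (w x)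
    _ = ‖x * w x * (u * exp (-(a * u)))‖ := by
        rw [norm_mul, norm_mul u, norm_eq_abs, norm_eq_abs, norm_eq_abs, abs_exp]
        ring

theorem integrable_cos_add_sin_div_sq_add_sq_mul (ha : 0 < a)
    (hw : Integrable (fun x => x * w x) μ) (s : ℝ) :
    Integrable (fun x => (x * cos (s * x) + a * sin (s * x)) / (a ^ 2 + x ^ 2) * w x) μ := by
  have h := (integrable_prod_exp_neg_mul_mul_sin ha hw s).integral_prod_left
  simp only [Function.uncurry_apply_pair, integral_Ioi_exp_neg_mul_mul_sin_mul ha] at h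
  exact (integrable_const_mul_iff (exp_pos (-(a * s))).ne'.isUnit _).1 h

variable [SFinite μ]

theorem integrableOn_exp_neg_mul_mul_sineTransform (ha : 0 < a)
    (hw : Integrable (fun x => x * w x) μ) (s : ℝ) :
    IntegrableOn (fun u => exp (-(a * u)) * sineTransform μ w u) (Ioi s) := by
  have h := (integrable_prod_exp_neg_mul_mul_sin ha hw s).integral_prod_right
  simp only [Function.uncurry_apply_pair, integral_const_mul] at h
  exact h

theorem exp_mul_integral_Ioi_exp_neg_mul_mul_sineTransform (ha : 0 < a)
    (hw : Integrable (fun x => x * w x) μ) (s : ℝ) :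
    exp (a * s) * ∫ u in Ioi s, exp (-(a * u)) * sineTransform μ w u =
      ∫ x, (x * cos (s * x) + a * sin (s * x)) / (a ^ 2 + x ^ 2) * w x ∂μ := by
  have hswap := integral_integral_swap (integrable_prod_exp_neg_mul_mul_sin ha hw s)
  simp only [integral_Ioi_exp_neg_mul_mul_sin_mul ha, integral_const_mul] at hswap
  simp only [sineTransform, ← hswap]
  rw [← mul_assoc, ← exp_add, add_neg_cancel, exp_zero, one_mul]

theorem two_mul_integral_cos_mul_div_sq_add_sq_mul (ha : 0 < a)
    (hw : Integrable (fun x => x * w x) μ) (s : ℝ) :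
    2 * ∫ x, cos (s * x) * x / (a ^ 2 + x ^ 2) * w x ∂μ =
      exp (a * s) * (∫ u in Ioi s, exp (-(a * u)) * sineTransform μ w u) +
        exp (-(a * s)) * ∫ u in Ioi (-s), exp (-(a * u)) * sineTransform μ w u := by
  rw [← mul_neg, exp_mul_integral_Ioi_exp_neg_mul_mul_sineTransform ha hw,
    exp_mul_integral_Ioi_exp_neg_mul_mul_sineTransform ha hw,
    ← integral_add (integrable_cos_add_sin_div_sq_add_sq_mul ha hw s)
      (integrable_cos_add_sin_div_sq_add_sq_mul ha hw (-s)), ← integral_const_mul]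
  congr with x
  simp only [neg_mul, cos_neg, sin_neg]
  ring

end SineTransform

section Langevin

/-- The Langevin function `coth u - 1 / u`; division by zero gives it its limit `0` at `u = 0`. -/
noncomputable def langevin (u : ℝ) : ℝ :=
  cosh u / sinh u - 1 / u

theorem langevin_zero : langevin 0 = 0 := by
  simp [langevin]

theorem I_mul_div_pi_mem_integerComplement {z : ℂ} (hz : Complex.sinh z ≠ 0) :
    Complex.I * z / π ∈ Complex.integerComplement := by
  rw [Complex.mem_integerComplement_iff]
  rintro ⟨n, hn⟩
  have hpi : (π : ℂ) ≠ 0 := Complex.ofReal_ne_zero.2 pi_ne_zero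
  have hsin : Complex.sin (z * Complex.I) = 0 :=
    Complex.sin_eq_zero_iff.2 ⟨n, by rw [hn]; field_simp⟩
  rw [Complex.sin_mul_I] at hsin
  exact hz (by simpa using hsin)

theorem complex_coth_sub_one_div_eq_tsum {z : ℂ} (hz : Complex.sinh z ≠ 0) :
    Complex.cosh z / Complex.sinh z - 1 / z =
      ∑' n : ℕ, 2 * z / ((π * (n + 1)) ^ 2 + z ^ 2) := by
  have hpi : (π : ℂ) ≠ 0 := Complex.ofReal_ne_zero.2 pi_ne_zero
  have hI := Complex.I_ne_zero
  have hz0 : z ≠ 0 := by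
    rintro rfl
    exact hz Complex.sinh_zero
  have hmem := I_mul_div_pi_mem_integerComplement hz
  have hterm (n : ℕ) : 1 / (Complex.I * z / π - (n + 1)) + 1 / (Complex.I * z / π + (n + 1)) =
      -(π * Complex.I) * (2 * z / ((π * (n + 1)) ^ 2 + z ^ 2)) := by
    have h := cotTerm_identity hmem n
    have hden : (π * (n + 1)) ^ 2 + z ^ 2 =
        -π ^ 2 * ((Complex.I * z / π + (n + 1)) * (Complex.I * z / π - (n + 1))) := by
      field_simp
      linear_combination (z ^ 2 : ℂ) * Complex.I_sq
    rw [cotTerm] at h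
    rw [h, hden]
    field_simp
  have hseries := cot_series_rep' hmem
  rw [tsum_congr hterm, tsum_mul_left, mul_div_cancel₀ _ hpi, Complex.cot_eq_cos_div_sin,
    mul_comm Complex.I, Complex.cos_mul_I, Complex.sin_mul_I] at hseries
  refine mul_left_cancel₀ (neg_ne_zero.2 (mul_ne_zero hpi hI)) (Eq.trans ?_ hseries)
  field_simp
  linear_combination (Complex.sinh z - z * Complex.cosh z) * Complex.I_sq

theorem langevin_eq_tsum (u : ℝ) :
    langevin u = ∑' n : ℕ, 2 * u / ((π * (n + 1)) ^ 2 + u ^ 2) := by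
  rcases eq_or_ne u 0 with rfl | hu
  · simp [langevin_zero]
  · have hsinh : Complex.sinh u ≠ 0 := by exact_mod_cast sinh_ne_zero.2 hu
    rw [langevin]
    exact_mod_cast complex_coth_sub_one_div_eq_tsum hsinh

end Langevin

section BoseEinstein

variable {c : ℝ}

theorem mul_exp_half_le_exp_sub_one {y : ℝ} (hy : 0 ≤ y) : y * exp (y / 2) ≤ exp y - 1 := by
  have hsinh : y ≤ 2 * sinh (y / 2) := by
    linarith [self_le_sinh_iff.2 (div_nonneg hy zero_le_two)]
  calc y * exp (y / 2) ≤ 2 * sinh (y / 2) * exp (y / 2) := by gcongr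
    _ = exp (y / 2 + y / 2) - exp (-(y / 2) + y / 2) := by
        rw [sinh_eq, exp_add, exp_add]
        ring
    _ = exp y - 1 := by rw [add_halves, neg_add_cancel, exp_zero]

theorem integrableOn_mul_inv_exp_mul_sub_one (hc : 0 < c) :
    IntegrableOn (fun x => x * (exp (c * x) - 1)⁻¹) (Ioi 0) := by
  refine ((exp_neg_integrableOn_Ioi 0 (half_pos hc)).const_mul c⁻¹).mono'
    (by fun_prop : Measurable _).aestronglyMeasurable ?_
  filter_upwards [ae_restrict_mem measurableSet_Ioi] with x (hx : 0 < x)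
  have hcx : 0 < c * x := mul_pos hc hx
  have hpos : 0 < exp (c * x) - 1 := by simpa using hcx
  have hexp : exp (-(c / 2) * x) * exp (c * x / 2) = 1 := by
    rw [← exp_add, exp_eq_one_iff]
    ring
  rw [norm_of_nonneg (by positivity), ← div_eq_mul_inv, div_le_iff₀ hpos]
  calc x = c⁻¹ * exp (-(c / 2) * x) * (c * x * exp (c * x / 2)) := by
        rw [mul_mul_mul_comm, hexp, inv_mul_cancel_left₀ hc.ne', mul_one]
    _ ≤ c⁻¹ * exp (-(c / 2) * x) * (exp (c * x) - 1) := by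
        gcongr
        exact mul_exp_half_le_exp_sub_one hcx.le

theorem integral_mul_exp_neg_mul {a : ℝ} (ha : 0 < a) :
    ∫ x in Ioi (0 : ℝ), x * exp (-(a * x)) = 1 / a ^ 2 := by
  have h := integral_rpow_mul_exp_neg_mul_Ioi zero_lt_two ha
  norm_num at h
  simpa using h

theorem hasSum_exp_neg_nat_succ_mul {y : ℝ} (hy : 0 < y) :
    HasSum (fun n : ℕ => exp (-((n + 1) * y))) (exp y - 1)⁻¹ := by
  have hgeom : HasSum (fun n : ℕ => exp (-y) * exp (-y) ^ n) (exp (-y) * (1 - exp (-y))⁻¹) :=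
    (hasSum_geometric_of_lt_one (exp_pos _).le (by simpa using hy)).mul_left _
  convert! hgeom using 1
  · ext n
    rw [← exp_nat_mul, ← exp_add]
    ring_nf
  · have hne : exp y - 1 ≠ 0 := by simpa [sub_eq_zero] using hy.ne'
    rw [exp_neg]
    field_simp

theorem hasSum_integral_exp_neg_mul {g : ℝ → ℝ} {K : ℝ} (hc : 0 < c)
    (hgm : AEStronglyMeasurable g (volume.restrict (Ioi 0))) (hg : ∀ x > 0, |g x| ≤ K * x) :
    HasSum (fun n : ℕ => ∫ x in Ioi 0, exp (-(c * (n + 1) * x)) * g x)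
      (∫ x in Ioi 0, g x * (exp (c * x) - 1)⁻¹) := by
  have hrate (n : ℕ) : 0 < c * (n + 1) := by positivity
  have hdom (n : ℕ) : IntegrableOn (fun x => K * (x * exp (-(c * (n + 1) * x)))) (Ioi 0) :=
    (integrableOn_mul_exp_neg_mul (hrate n) 0).const_mul K
  have hbound (n : ℕ) (x : ℝ) (hx : x ∈ Ioi 0) :
      ‖exp (-(c * (n + 1) * x)) * g x‖ ≤ K * (x * exp (-(c * (n + 1) * x))) := by
    rw [norm_mul, norm_eq_abs, abs_exp, ← mul_assoc, mul_comm]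
    exact mul_le_mul_of_nonneg_right (hg x hx) (exp_pos _).le
  have hint (n : ℕ) : IntegrableOn (fun x => exp (-(c * (n + 1) * x)) * g x) (Ioi 0) :=
    (hdom n).mono' (Continuous.aestronglyMeasurable (by fun_prop) |>.mul hgm)
      (ae_restrict_of_forall_mem measurableSet_Ioi (hbound n))
  have hsummable : Summable fun n : ℕ => ∫ x in Ioi 0, ‖exp (-(c * (n + 1) * x)) * g x‖ := by
    refine Summable.of_nonneg_of_le (fun n => integral_nonneg fun x => norm_nonneg _)
      (fun n => setIntegral_mono_on (hint n).norm (hdom n) measurableSet_Ioi (hbound n)) ?_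
    have hsq : Summable fun n : ℕ => 1 / ((n + 1 : ℕ) : ℝ) ^ 2 :=
      (summable_nat_add_iff 1).2 (summable_one_div_nat_pow.2 one_lt_two)
    refine (hsq.mul_left (K / c ^ 2)).congr fun n => ?_
    rw [integral_const_mul, integral_mul_exp_neg_mul (hrate n)]
    push_cast
    field_simp
  convert! hasSum_integral_of_summable_integral_norm hint hsummable using 1
  refine setIntegral_congr_fun measurableSet_Ioi fun x hx => ?_
  have hgeom := hasSum_exp_neg_nat_succ_mul (mul_pos hc hx)
  simp only [← mul_assoc, mul_comm _ c] at hgeom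
  rw [tsum_mul_right, hgeom.tsum_eq, mul_comm]

theorem sineTransform_inv_exp_mul_sub_one (hc : 0 < c) (u : ℝ) :
    sineTransform (volume.restrict (Ioi 0)) (fun x => (exp (c * x) - 1)⁻¹) u =
      π / (2 * c) * langevin (π * u / c) := by
  have hsin (x : ℝ) (hx : 0 < x) : |sin (u * x)| ≤ |u| * x := by
    simpa only [abs_mul, abs_of_pos hx] using abs_sin_le_abs (x := u * x)
  have hsum := hasSum_integral_exp_neg_mul hc
    (Continuous.aestronglyMeasurable (by fun_prop)) hsin
  rw [sineTransform, ← hsum.tsum_eq, langevin_eq_tsum, ← tsum_mul_left]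
  refine tsum_congr fun n => ?_
  have hrate : 0 < c * ((n : ℝ) + 1) := by positivity
  rw [integral_Ioi_exp_neg_mul_mul_sin hrate]
  simp only [mul_zero, neg_zero, exp_zero, cos_zero, sin_zero, mul_one, add_zero, one_mul]
  field_simp

end BoseEinstein

section ExponentialIntegrals

theorem tendsto_inv_mul_one_sub_exp_neg :
    Tendsto (fun u => u⁻¹ * (1 - exp (-u))) (𝓝[≠] 0) (𝓝 1) := by
  have hderiv : HasDerivAt (fun u : ℝ => 1 - exp (-u)) 1 0 := by
    simpa using (hasDerivAt_neg (0 : ℝ)).exp.const_sub 1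
  simpa using hasDerivAt_iff_tendsto_slope_zero.1 hderiv

theorem integral_log_mul_exp_neg :
    ∫ t in Ioi (0 : ℝ), log t * exp (-t) = -eulerMascheroniConstant := by
  have hGamma : Complex.GammaIntegral =ᶠ[𝓝 1] Complex.Gamma := by
    have hopen : IsOpen {s : ℂ | 0 < s.re} := isOpen_Ioi.preimage Complex.continuous_re
    filter_upwards [hopen.mem_nhds (by simp : (0 : ℝ) < (1 : ℂ).re)] with s hs
    exact (Complex.Gamma_eq_integral hs).symm
  have hderiv := (Complex.hasDerivAt_GammaIntegral (s := 1) (by simp)).unique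
    (Complex.hasDerivAt_Gamma_one.congr_of_eventuallyEq hGamma)
  simp only [sub_self, Complex.cpow_zero, one_mul, ← Complex.ofReal_mul,
    integral_complex_ofReal] at hderiv
  exact_mod_cast hderiv

theorem integrableOn_log_mul_exp_neg :
    IntegrableOn (fun t => log t * exp (-t)) (Ioi 0) := by
  refine Integrable.of_integral_ne_zero ?_
  rw [integral_log_mul_exp_neg]
  linarith [one_half_lt_eulerMascheroniConstant]

theorem tendsto_log_mul_exp_neg_atTop :
    Tendsto (fun t => log t * exp (-t)) atTop (𝓝 0) := by
  have h := isLittleO_log_id_atTop.tendsto_div_nhds_zero.mul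
    (tendsto_pow_mul_exp_neg_atTop_nhds_zero 1)
  rw [zero_mul] at h
  refine h.congr' ?_
  filter_upwards [eventually_ne_atTop 0] with t ht
  rw [id, pow_one, ← mul_assoc, div_mul_cancel₀ _ ht]

theorem hasDerivAt_tsum_pow_succ_div_mul_factorial (x : ℝ) :
    HasDerivAt (fun x : ℝ => ∑' k : ℕ, x ^ (k + 1) / ((k + 1) * (Nat.factorial (k + 1))))
      (∑' k : ℕ, x ^ k / (Nat.factorial (k + 1))) x := by
  have hzero : (0 : ℝ) ∈ Metric.ball (0 : ℝ) (|x| + 1) := Metric.mem_ball_self (by positivity)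
  refine hasDerivAt_tsum_of_isPreconnected (t := Metric.ball (0 : ℝ) (|x| + 1)) (y₀ := (0 : ℝ))
    (g' := fun (k : ℕ) (y : ℝ) => y ^ k / (Nat.factorial (k + 1)))
    (summable_pow_div_factorial (|x| + 1)) Metric.isOpen_ball (convex_ball 0 _).isPreconnected
    (fun k y _ => ?_) (fun k y hy => ?_) hzero (by simp [summable_zero]) (by simp)
  · convert! (hasDerivAt_pow (k + 1) y).div_const (((k : ℝ) + 1) * (Nat.factorial (k + 1))) using 1
    push_cast
    field_simp
  · have hy' : |y| ≤ |x| + 1 := (mem_ball_zero_iff.1 hy).le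
    rw [norm_div, norm_pow, norm_eq_abs, RCLike.norm_natCast]
    gcongr
    exact k.le_succ

theorem tsum_pow_div_factorial_succ {x : ℝ} (hx : x ≠ 0) :
    ∑' k : ℕ, x ^ k / (Nat.factorial (k + 1)) = (exp x - 1) / x := by
  have hexp : exp x = 1 + ∑' k : ℕ, x ^ (k + 1) / (Nat.factorial (k + 1)) := by
    have h := (summable_pow_div_factorial x).tsum_eq_zero_add
    rw [pow_zero, Nat.factorial_zero, Nat.cast_one, div_one] at h
    rw [← h, exp_eq_exp_ℝ, NormedSpace.exp_eq_tsum_div]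
  rw [eq_div_iff hx, ← tsum_mul_right, hexp, add_sub_cancel_left]
  simp only [pow_succ, div_mul_eq_mul_div]

theorem hasDerivAt_expIntegralEi {x : ℝ} (hx : x ≠ 0) :
    HasDerivAt expIntegralEi (exp x / x) x := by
  convert! ((hasDerivAt_log hx).const_add eulerMascheroniConstant).fun_add
    (hasDerivAt_tsum_pow_succ_div_mul_factorial x) using 1
  rw [tsum_pow_div_factorial_succ hx]
  field_simp
  ring

theorem hasDerivAt_expIntegralEi_neg {x : ℝ} (hx : x ≠ 0) :
    HasDerivAt (fun x => expIntegralEi (-x)) (exp (-x) / x) x := by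
  convert! (hasDerivAt_expIntegralEi (neg_ne_zero.2 hx)).scomp x (hasDerivAt_neg x) using 1
  rw [smul_eq_mul]
  field_simp

theorem tendsto_expIntegralEi_neg_sub_log :
    Tendsto (fun x => expIntegralEi (-x) - log x) (𝓝 0) (𝓝 eulerMascheroniConstant) := by
  have hseries := (hasDerivAt_tsum_pow_succ_div_mul_factorial 0).continuousAt.tendsto.const_add
    eulerMascheroniConstant
  simp only [zero_pow (Nat.succ_ne_zero _), zero_div, tsum_zero, add_zero] at hseries
  refine (hseries.comp (continuous_neg.tendsto' 0 0 neg_zero)).congr fun x => ?_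
  rw [expIntegralEi, log_neg_eq_log, Function.comp]
  ring

theorem integral_zero_to_log_mul_exp_neg {x : ℝ} (hx : 0 < x) :
    ∫ t in (0 : ℝ)..x, log t * exp (-t) =
      expIntegralEi (-x) - log x * exp (-x) - eulerMascheroniConstant := by
  let G : ℝ → ℝ := fun t => expIntegralEi (-t) - log t * exp (-t)
  have hderiv (t : ℝ) (ht : 0 < t) : HasDerivAt G (log t * exp (-t)) t := by
    convert! (hasDerivAt_expIntegralEi_neg ht.ne').fun_sub
      ((hasDerivAt_log ht.ne').fun_mul (hasDerivAt_neg t).exp) using 1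
    field_simp
    ring
  have hzero : Tendsto G (𝓝[>] 0) (𝓝 eulerMascheroniConstant) := by
    have hlog := ((continuous_mul_log.tendsto' 0 0 (by simp)).mono_left nhdsWithin_le_nhds).mul
      tendsto_inv_mul_one_sub_exp_neg
    have h := (tendsto_expIntegralEi_neg_sub_log.mono_left nhdsWithin_le_nhds).add hlog
    rw [zero_mul, add_zero] at h
    refine (h.congr' ?_).mono_left (nhdsGT_le_nhdsNE 0)
    filter_upwards [self_mem_nhdsWithin] with t (ht : t ≠ 0)
    simp only [G]
    field_simp
    ring
  exact intervalIntegral.integral_eq_sub_of_hasDerivAt_of_tendsto hx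
    (fun t ht => hderiv t ht.1)
    ((intervalIntegrable_iff_integrableOn_Ioc_of_le hx.le).2
      (integrableOn_log_mul_exp_neg.mono_set Ioc_subset_Ioi_self)) hzero
    ((hderiv x hx).continuousAt.tendsto.mono_left nhdsWithin_le_nhds)

-- Since `∫ log t * exp (-t) = -γ`, the constant `γ` in `Ei` is the one that makes `Ei (-x)` decay.
theorem tendsto_expIntegralEi_neg_atTop :
    Tendsto (fun x => expIntegralEi (-x)) atTop (𝓝 0) := by
  have h := (intervalIntegral_tendsto_integral_Ioi 0 integrableOn_log_mul_exp_neg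
    tendsto_id).add_const eulerMascheroniConstant |>.add tendsto_log_mul_exp_neg_atTop
  rw [integral_log_mul_exp_neg, neg_add_cancel, zero_add] at h
  refine h.congr' ?_
  filter_upwards [eventually_gt_atTop 0] with x hx
  rw [id, integral_zero_to_log_mul_exp_neg hx, sub_add_cancel, sub_add_cancel]

theorem expIntegralE1_eq_neg_expIntegralEi_neg {s : ℝ} (hs : 0 < s) :
    expIntegralE1 s = -expIntegralEi (-s) := by
  rw [expIntegralE1, ← zero_sub]
  exact integral_Ioi_of_hasDerivAt_of_nonneg'
    (fun t ht => hasDerivAt_expIntegralEi_neg (hs.trans_le ht).ne')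
    (fun t ht => div_nonneg (exp_pos _).le (hs.trans ht).le) tendsto_expIntegralEi_neg_atTop

end ExponentialIntegrals

section LogCothHalf

theorem exp_neg_mul_exp (u : ℝ) : exp (-u) * exp u = 1 := by
  rw [← exp_add, neg_add_cancel, exp_zero]

/-- The function `log |coth (u / 2)|`, written in terms of `exp (-u)`; recall that `Real.log x` is
`log |x|`, so that the function is even. -/
noncomputable def logCothHalf (u : ℝ) : ℝ :=
  log ((1 + exp (-u)) / (1 - exp (-u)))

theorem one_sub_exp_neg_ne_zero {u : ℝ} (hu : u ≠ 0) : 1 - exp (-u) ≠ 0 := by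
  rw [sub_ne_zero, ne_comm, Ne, exp_eq_one_iff, neg_eq_zero]
  exact hu

theorem logCothHalf_neg (u : ℝ) : logCothHalf (-u) = logCothHalf u := by
  rcases eq_or_ne u 0 with rfl | hu
  · rw [neg_zero]
  · have hratio : (1 + exp u) / (1 - exp u) = -((1 + exp (-u)) / (1 - exp (-u))) := by
      have hne := one_sub_exp_neg_ne_zero hu
      have hne' := one_sub_exp_neg_ne_zero (neg_ne_zero.2 hu)
      rw [neg_neg] at hne'
      field_simp
      linear_combination -2 * exp_neg_mul_exp u
    rw [logCothHalf, neg_neg, hratio, log_neg_eq_log, logCothHalf]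

theorem hasDerivAt_logCothHalf {u : ℝ} (hu : u ≠ 0) :
    HasDerivAt logCothHalf (-(1 / sinh u)) u := by
  have hden := one_sub_exp_neg_ne_zero hu
  have hnum : 1 + exp (-u) ≠ 0 := by positivity
  have hexp : HasDerivAt (fun u => exp (-u)) (-exp (-u)) u := by
    simpa using (hasDerivAt_neg u).exp
  have hsinh : sinh u ≠ 0 := sinh_ne_zero.2 hu
  convert! ((hexp.const_add 1).fun_div (hexp.const_sub 1) hden).log (div_ne_zero hnum hden) using 1
  have hfactor : 2 * exp (-u) * sinh u = (1 + exp (-u)) * (1 - exp (-u)) := by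
    rw [sinh_eq]
    linear_combination exp_neg_mul_exp u
  field_simp
  linear_combination hfactor

theorem tendsto_logCothHalf_atTop : Tendsto logCothHalf atTop (𝓝 0) := by
  have hexp := tendsto_exp_neg_atTop_nhds_zero
  have h := ((hexp.const_add 1).div (hexp.const_sub 1) (by simp)).log (by simp)
  rw [add_zero, sub_zero, div_one, log_one] at h
  exact h

theorem tendsto_logCothHalf_add_log :
    Tendsto (fun u => logCothHalf u + log u) (𝓝[≠] 0) (𝓝 (log 2)) := by
  have hnum : Tendsto (fun u => 1 + exp (-u)) (𝓝[≠] 0) (𝓝 2) :=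
    (Continuous.tendsto' (by fun_prop) 0 2 (by norm_num)).mono_left nhdsWithin_le_nhds
  have h := (hnum.div tendsto_inv_mul_one_sub_exp_neg one_ne_zero).log (by norm_num)
  rw [div_one] at h
  refine h.congr' ?_
  filter_upwards [self_mem_nhdsWithin] with u (hu : u ≠ 0)
  have hden := one_sub_exp_neg_ne_zero hu
  rw [logCothHalf, ← log_mul (div_ne_zero (by positivity) hden) hu]
  congr 1
  simp only [Pi.div_apply]
  field_simp

end LogCothHalf

section LangevinPrimitive

theorem sineTransform_inv_exp_pi_mul_sub_one :
    sineTransform (volume.restrict (Ioi 0)) (fun x => (exp (π * x) - 1)⁻¹) =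
      fun u => langevin u / 2 := by
  ext u
  rw [sineTransform_inv_exp_mul_sub_one pi_pos, mul_div_cancel_left₀ u pi_ne_zero]
  field_simp

theorem integrableOn_exp_neg_mul_langevin (s : ℝ) :
    IntegrableOn (fun u => exp (-u) * langevin u) (Ioi s) := by
  have h := (integrableOn_exp_neg_mul_mul_sineTransform one_pos
    (integrableOn_mul_inv_exp_mul_sub_one pi_pos) s).const_mul 2
  refine IntegrableOn.congr_fun h (fun u _ => ?_) measurableSet_Ioi
  simp only [sineTransform_inv_exp_pi_mul_sub_one, one_mul]
  ring

theorem continuousAt_langevin_zero : ContinuousAt langevin 0 := by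
  have h := (tendsto_sineTransform_zero (integrableOn_mul_inv_exp_mul_sub_one pi_pos)).const_mul 2
  simp only [sineTransform_inv_exp_pi_mul_sub_one, mul_div_cancel₀ _ (two_ne_zero (α := ℝ))] at h
  rw [mul_zero] at h
  rwa [ContinuousAt, langevin_zero]

/-- The primitive of `u ↦ exp (-u) * langevin u` that vanishes at `+∞`. The logarithmic
singularities of `logCothHalf` and of `Ei` cancel at `0`, where the limit is put in. -/
noncomputable def langevinPrimitive : ℝ → ℝ :=
  Function.update (fun u => exp (-u) - logCothHalf u - expIntegralEi (-u)) 0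
    (1 - log 2 - eulerMascheroniConstant)

theorem langevinPrimitive_zero : langevinPrimitive 0 = 1 - log 2 - eulerMascheroniConstant :=
  Function.update_self ..

theorem langevinPrimitive_of_ne_zero {u : ℝ} (hu : u ≠ 0) :
    langevinPrimitive u = exp (-u) - logCothHalf u - expIntegralEi (-u) :=
  Function.update_of_ne hu ..

theorem continuousAt_langevinPrimitive_zero : ContinuousAt langevinPrimitive 0 := by
  refine continuousAt_update_same.2 ?_
  have hexp : Tendsto (fun u => exp (-u)) (𝓝[≠] 0) (𝓝 1) :=
    (Continuous.tendsto' (by fun_prop) 0 1 (by simp)).mono_left nhdsWithin_le_nhds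
  have hEi := tendsto_expIntegralEi_neg_sub_log.mono_left (nhdsWithin_le_nhds (s := {0}ᶜ))
  refine ((hexp.sub tendsto_logCothHalf_add_log).sub hEi).congr fun u => ?_
  ring

theorem hasDerivAt_langevinPrimitive_of_ne_zero {u : ℝ} (hu : u ≠ 0) :
    HasDerivAt langevinPrimitive (exp (-u) * langevin u) u := by
  have hcongr : langevinPrimitive =ᶠ[𝓝 u]
      fun u => exp (-u) - logCothHalf u - expIntegralEi (-u) := by
    filter_upwards [isOpen_ne.mem_nhds hu] with v hv using langevinPrimitive_of_ne_zero hv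
  refine HasDerivAt.congr_of_eventuallyEq ?_ hcongr
  convert! ((hasDerivAt_neg u).exp.fun_sub (hasDerivAt_logCothHalf hu)).fun_sub
    (hasDerivAt_expIntegralEi_neg hu) using 1
  have hsinh : sinh u ≠ 0 := sinh_ne_zero.2 hu
  have hexp := exp_neg_mul_exp u
  rw [← cosh_add_sinh u] at hexp
  rw [langevin]
  field_simp
  linear_combination u * hexp

theorem hasDerivAt_langevinPrimitive (u : ℝ) :
    HasDerivAt langevinPrimitive (exp (-u) * langevin u) u := by
  rcases eq_or_ne u 0 with rfl | hu
  · have hcont : ContinuousAt (fun u => exp (-u) * langevin u) 0 :=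
      ContinuousAt.mul (by fun_prop) continuousAt_langevin_zero
    exact hasDerivAt_of_hasDerivAt_of_ne (fun _ => hasDerivAt_langevinPrimitive_of_ne_zero)
      continuousAt_langevinPrimitive_zero hcont
  · exact hasDerivAt_langevinPrimitive_of_ne_zero hu

theorem tendsto_langevinPrimitive_atTop : Tendsto langevinPrimitive atTop (𝓝 0) := by
  have h := (tendsto_exp_neg_atTop_nhds_zero.sub tendsto_logCothHalf_atTop).sub
    tendsto_expIntegralEi_neg_atTop
  rw [sub_zero, sub_zero] at h
  refine h.congr' ?_
  filter_upwards [eventually_ne_atTop 0] with u hu using (langevinPrimitive_of_ne_zero hu).symm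

theorem integral_Ioi_exp_neg_mul_langevin (s : ℝ) :
    ∫ u in Ioi s, exp (-u) * langevin u = -langevinPrimitive s := by
  rw [← zero_sub]
  exact integral_Ioi_of_hasDerivAt_of_tendsto' (fun u _ => hasDerivAt_langevinPrimitive u)
    (integrableOn_exp_neg_mul_langevin s) tendsto_langevinPrimitive_atTop

theorem two_mul_integral_cos_mul_div_eq_langevinPrimitive (s : ℝ) :
    2 * ∫ x in Ioi (0 : ℝ), cos (s * x) * x / ((1 + x ^ 2) * (exp (π * x) - 1)) =
      -(exp s * langevinPrimitive s + exp (-s) * langevinPrimitive (-s)) / 2 := by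
  have h := two_mul_integral_cos_mul_div_sq_add_sq_mul one_pos
    (integrableOn_mul_inv_exp_mul_sub_one pi_pos) s
  simp only [sineTransform_inv_exp_pi_mul_sub_one, one_mul, one_pow, ← mul_div_assoc, integral_div,
    integral_Ioi_exp_neg_mul_langevin, ← div_eq_mul_inv, div_div] at h
  rw [h]
  ring

end LangevinPrimitive

/-- For every `s > 0`,
`2 ∫₀^∞ cos(s x) · x / ((1+x²)(e^{πx} − 1)) dx
  = (e^{−s} Ei(s) − e^{s} E₁(s))/2 + cosh(s) log((1+e^{−s})/(1−e^{−s})) − 1`,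
and at `s = 0`, `2 ∫₀^∞ x/((1+x²)(e^{πx} − 1)) dx = γ + log 2 − 1`. -/
theorem stmt_13 :
    (∀ s : ℝ, 0 < s →
      2 * ∫ x in Ioi (0 : ℝ),
          Real.cos (s * x) * x / ((1 + x ^ 2) * (Real.exp (Real.pi * x) - 1)) =
        (Real.exp (-s) * expIntegralEi s - Real.exp s * expIntegralE1 s) / 2 +
          Real.cosh s * Real.log ((1 + Real.exp (-s)) / (1 - Real.exp (-s))) - 1) ∧
    (2 * ∫ x in Ioi (0 : ℝ), x / ((1 + x ^ 2) * (Real.exp (Real.pi * x) - 1)) =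
        Real.eulerMascheroniConstant + Real.log 2 - 1) := by
  refine ⟨fun s hs => ?_, ?_⟩
  · rw [two_mul_integral_cos_mul_div_eq_langevinPrimitive, langevinPrimitive_of_ne_zero hs.ne',
      langevinPrimitive_of_ne_zero (neg_ne_zero.2 hs.ne'), neg_neg, logCothHalf_neg,
      expIntegralE1_eq_neg_expIntegralEi_neg hs, cosh_eq, ← logCothHalf]
    linear_combination -exp_neg_mul_exp s
  · have hzero := two_mul_integral_cos_mul_div_eq_langevinPrimitive 0
    simp only [zero_mul, cos_zero, one_mul, neg_zero, exp_zero, langevinPrimitive_zero] at hzero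
    rw [hzero]
    ring
end
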